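/- arXiv:2402.05021 — 6 statements merged into one kernel-verified Lean document; each statement's English description precedes it below -/
import Mathlib

section
/- Let k be an algebraically closed field of characteristic 0, let n ≥ 3 be an integer, and let q be a nondegenerate quadratic form on V = k^{n+2} with polar bilinear form B_q. Let x ∈ V be a nonzero vector with q(x) = 0, and let G_x = {M ∈ SO(q) : M·x ∈ k·x} be the stabilizer in SO(q) of the projective point [x]. Then the orbits of the induced action of G_x on the projective quadric Q = {[y] ∈ ℙ(V) : q(y) = 0} are exactly the three sets: the single point {[x]}; the set H ∖ {[x]}, where H = {[y] ∈ Q : B_q(x,y) = 0}; and the set Q ∖ H. -/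
open QuadraticMap

/-- The orbit of a projective point under the stabilizer, inside `SO(q)`, of the
projective point `[x]` (the elements of `SO(q)` being the determinant-one linear
automorphisms preserving the quadratic form `q`). -/
def stabOrbit {k : Type*} [Field k] {N : ℕ}
    (q : QuadraticForm k (Fin N → k)) (x : Fin N → k)
    (p : Projectivization k (Fin N → k)) : Set (Projectivization k (Fin N → k)) :=
  {p' | ∃ f : (Fin N → k) ≃ₗ[k] (Fin N → k),
      (∀ v, q (f v) = q v) ∧
      LinearMap.det (f : (Fin N → k) →ₗ[k] (Fin N → k)) = 1 ∧
      (∃ c : k, f x = c • x) ∧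
      Projectivization.map (f : (Fin N → k) →ₗ[k] (Fin N → k)) f.injective p = p'}

/-!
Let `y` and `z` be isotropic vectors off the line `⟨x⟩` with `B(x, y) = B(x, z)`. The reflection in
an anisotropic difference of two isotropic vectors exchanges them, and reflections in vectors
orthogonal to `x` fix `x`. So it suffices to find an anisotropic `v` orthogonal to `x` for which
`s_v y - z` is anisotropic too: the product of the two reflections then lies in the special
orthogonal group, fixes `x` and maps `y` to `z`. When `B(y, z) ≠ 0` any anisotropic `v` orthogonal
to `x` and `z` will do, and it exists because a totally isotropic subspace has at most half the
dimension; when `B(y, z) = 0` one needs a `v` orthogonal to neither `y` nor `z`. Rescaling `z`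
gives transitivity on each of the two large orbits.
-/

theorem exists_ne_zero_eq_mul {k : Type*} [GroupWithZero k] {b c : k} (h : b = 0 ↔ c = 0) :
    ∃ a ≠ 0, b = a * c := by
  by_cases hc : c = 0
  · exact ⟨1, one_ne_zero, by rw [h.2 hc, hc, mul_zero]⟩
  · exact ⟨b / c, div_ne_zero (h.not.2 hc) hc, (div_mul_cancel₀ b hc).symm⟩

section LinearAlgebra

variable {R M N : Type*} [Ring R] [AddCommGroup M] [Module R M] [AddCommGroup N] [Module R N]

theorem ne_zero_of_apply_eq_smul (f : M ≃ₗ[R] N) {v : M} {w : N} {c : R} (hv : v ≠ 0)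
    (h : f v = c • w) : c ≠ 0 := by
  rintro rfl
  exact hv (f.map_eq_zero_iff.1 (h.trans (zero_smul R w)))

theorem exists_mem_apply_ne_zero_and_apply_ne_zero {S : Submodule R M} {f g : M →ₗ[R] N}
    (hf : ∃ a ∈ S, f a ≠ 0) (hg : ∃ b ∈ S, g b ≠ 0) : ∃ c ∈ S, f c ≠ 0 ∧ g c ≠ 0 := by
  obtain ⟨a, haS, hfa⟩ := hf
  obtain ⟨b, hbS, hgb⟩ := hg
  by_cases hga : g a = 0
  · by_cases hfb : f b = 0
    · exact ⟨a + b, S.add_mem haS hbS, by simpa [hfb] using hfa, by simpa [hga] using hgb⟩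
    · exact ⟨b, hbS, hfb, hgb⟩
  · exact ⟨a, haS, hfa, hga⟩

theorem exists_mem_orthogonal_apply_ne_zero {k V : Type*} [Field k] [AddCommGroup V] [Module k V]
    [FiniteDimensional k V] {B : LinearMap.BilinForm k V} (hB : B.Nondegenerate) (hB' : B.IsRefl)
    {S : Submodule k V} {y : V} (hy : y ∉ S) :
    ∃ a ∈ B.orthogonal S, B y a ≠ 0 := by
  by_contra! h
  rw [← LinearMap.BilinForm.orthogonal_orthogonal hB hB' S] at hy
  exact hy fun a ha ↦ hB' y a (h a ha)

end LinearAlgebra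

section Polar

variable {R M N : Type*} [CommRing R] [AddCommGroup M] [Module R M] [AddCommGroup N] [Module R N]

theorem map_sub_eq_add_sub_polar (q : QuadraticMap R M N) (u v : M) :
    q (u - v) = q u + q v - polar q u v := by
  rw [sub_eq_add_neg, QuadraticMap.map_add q, QuadraticMap.map_neg, polar_neg_right,
    ← sub_eq_add_neg]

theorem polar_isometryEquiv_apply {q : QuadraticMap R M N} (f : q.IsometryEquiv q) (u v : M) :
    polar q (f u) (f v) = polar q u v := by
  simp only [polar, ← map_add, QuadraticMap.IsometryEquiv.map_app]

theorem polarBilin_isRefl (q : QuadraticMap R M N) : (polarBilin q).IsRefl :=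
  fun v w h ↦ (polar_comm q w v).trans h

end Polar

section QuadraticSpace

variable {k V : Type*} [Field k] [AddCommGroup V] [Module k V] {q : QuadraticForm k V}

theorem inv_smul_polarBilin_apply_self {v : V} (hv : q v ≠ 0) :
    ((q v)⁻¹ • polarBilin q v) v = 2 := by
  simp [polar_self, hv, mul_comm]

/-- The orthogonal reflection `u ↦ u - (B(v, u) / q(v)) v` in an anisotropic vector `v`, as an
isometry. In characteristic two it is the orthogonal transvection. -/
noncomputable def orthogonalReflection (q : QuadraticForm k V) {v : V} (hv : q v ≠ 0) :
    q.IsometryEquiv q where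
  toLinearEquiv := Module.reflection (inv_smul_polarBilin_apply_self hv)
  map_app' u := by
    change q (Module.reflection _ u) = q u
    rw [Module.reflection_apply, map_sub_eq_add_sub_polar, QuadraticMap.map_smul,
      polar_smul_right, polar_comm q u v]
    simp only [LinearMap.smul_apply, polarBilin_apply_apply, smul_eq_mul]
    field_simp
    ring

section Reflection

variable {v : V} (hv : q v ≠ 0)

theorem orthogonalReflection_apply (u : V) :
    orthogonalReflection q hv u = u - (polar q v u / q v) • v := by
  change Module.reflection (inv_smul_polarBilin_apply_self hv) u = _
  simp [Module.reflection_apply, div_eq_inv_mul]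

theorem orthogonalReflection_apply_of_polar_eq_zero {u : V} (h : polar q u v = 0) :
    orthogonalReflection q hv u = u := by
  rw [orthogonalReflection_apply, polar_comm, h, zero_div, zero_smul, sub_zero]

theorem orthogonalReflection_sub_apply {y z : V} (hyz : q y = q z) (h : q (y - z) ≠ 0) :
    orthogonalReflection q h y = z := by
  have hpolar : polar q (y - z) y = q (y - z) := by
    rw [polar_sub_left, polar_self, polar_comm q z, map_sub_eq_add_sub_polar, hyz, two_nsmul]
  rw [orthogonalReflection_apply, hpolar, div_self h, one_smul, sub_sub_cancel]

theorem det_orthogonalReflection [FiniteDimensional k V] :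
    LinearMap.det ((orthogonalReflection q hv).toLinearEquiv : V →ₗ[k] V) = -1 := by
  have htransvection : ((orthogonalReflection q hv).toLinearEquiv : V →ₗ[k] V) =
      LinearMap.transvection ((q v)⁻¹ • polarBilin q v) (-v) := by
    ext u
    simp [orthogonalReflection, Module.reflection_apply, LinearMap.transvection.apply,
      sub_eq_add_neg]
  rw [htransvection, LinearMap.transvection.det, map_neg, inv_smul_polarBilin_apply_self hv]
  norm_num

end Reflection

variable [FiniteDimensional k V] {x y z : V}

theorem exists_mem_orthogonal_map_ne_zero (hq : (polarBilin q).Nondegenerate)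
    {S : Submodule k V} (hS : 2 * Module.finrank k S < Module.finrank k V) :
    ∃ w ∈ LinearMap.BilinForm.orthogonal (polarBilin q) S, q w ≠ 0 := by
  by_contra! hisotropic
  let W := LinearMap.BilinForm.orthogonal (polarBilin q) S
  have hle : W ≤ LinearMap.BilinForm.orthogonal (polarBilin q) W := fun w hw u hu ↦ by
    change q (u + w) - q u - q w = 0
    simp only [hisotropic _ (W.add_mem hu hw), hisotropic _ hu, hisotropic _ hw, sub_zero]
  have hfinrank := Submodule.finrank_mono hle
  rw [LinearMap.BilinForm.finrank_orthogonal hq W,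
    LinearMap.BilinForm.finrank_orthogonal hq S] at hfinrank
  omega

theorem exists_anisotropic_polar_eq_zero (hq : (polarBilin q).Nondegenerate)
    (hV : 5 ≤ Module.finrank k V) (x y : V) :
    ∃ w, q w ≠ 0 ∧ polar q x w = 0 ∧ polar q y w = 0 := by
  let S := Submodule.span k (Set.range ![x, y])
  have hS : Module.finrank k S ≤ 2 := finrank_range_le_card ![x, y]
  obtain ⟨w, hw, hqw⟩ := exists_mem_orthogonal_map_ne_zero hq (S := S) (by omega)
  exact ⟨w, hqw, hw x (Submodule.subset_span ⟨0, rfl⟩), hw y (Submodule.subset_span ⟨1, rfl⟩)⟩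

theorem exists_anisotropic_polar_ne_zero_of_orthogonal (hq : (polarBilin q).Nondegenerate)
    (hy : y ∉ Submodule.span k {x}) (hz : z ∉ Submodule.span k {x}) (hqy : q y = 0)
    (hxy : polar q x y = 0) (hzy : polar q z y = 0) :
    ∃ v, q v ≠ 0 ∧ polar q x v = 0 ∧ polar q y v ≠ 0 ∧ polar q z v ≠ 0 := by
  obtain ⟨v, hxv, hyv, hzv⟩ := exists_mem_apply_ne_zero_and_apply_ne_zero
    (exists_mem_orthogonal_apply_ne_zero hq (polarBilin_isRefl q) hy)
    (exists_mem_orthogonal_apply_ne_zero hq (polarBilin_isRefl q) hz)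
  replace hxv : polar q x v = 0 := hxv x (Submodule.mem_span_singleton_self x)
  rw [polarBilin_apply_apply] at hyv hzv
  by_cases hv : q v = 0
  · have hqvy : q (v + y) = polar q y v := by
      rw [QuadraticMap.map_add q, hv, hqy, zero_add, zero_add, polar_comm]
    refine ⟨v + y, by rwa [hqvy], ?_, ?_, ?_⟩
    · rw [polar_add_right, hxv, hxy, add_zero]
    · rwa [polar_add_right, polar_self, hqy, smul_zero, add_zero]
    · rwa [polar_add_right, hzy, add_zero]
  · exact ⟨v, hv, hxv, hyv, hzv⟩

theorem exists_anisotropic_polar_ne_zero_of_not_orthogonal (hq : (polarBilin q).Nondegenerate)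
    (hV : 5 ≤ Module.finrank k V) (hqx : q x = 0) (hxy : polar q x y ≠ 0)
    (hxyz : polar q x y = polar q x z) :
    ∃ v, q v ≠ 0 ∧ polar q x v = 0 ∧ polar q y v ≠ 0 ∧ polar q z v ≠ 0 := by
  obtain ⟨u, hu, hxu, hyzu⟩ := exists_anisotropic_polar_eq_zero hq hV x (y - z)
  rw [polar_sub_left, sub_eq_zero] at hyzu
  by_cases hyu : polar q y u = 0
  · have hzu : polar q z u = 0 := hyzu ▸ hyu
    refine ⟨u + x, ?_, ?_, ?_, ?_⟩
    · rwa [QuadraticMap.map_add q, hqx, polar_comm q u, hxu, add_zero, add_zero]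
    · rw [polar_add_right, hxu, polar_self, hqx, smul_zero, add_zero]
    · rwa [polar_add_right, hyu, zero_add, polar_comm]
    · rwa [polar_add_right, hzu, zero_add, polar_comm, ← hxyz]
  · exact ⟨u, hu, hxu, hyu, hyzu ▸ hyu⟩

theorem exists_anisotropic_map_orthogonalReflection_sub_ne_zero
    (hq : (polarBilin q).Nondegenerate) (hV : 5 ≤ Module.finrank k V)
    (hy : y ∉ Submodule.span k {x}) (hz : z ∉ Submodule.span k {x})
    (hqx : q x = 0) (hqy : q y = 0) (hqz : q z = 0) (hxyz : polar q x y = polar q x z) :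
    ∃ (v : V) (hv : q v ≠ 0), polar q x v = 0 ∧ q (orthogonalReflection q hv y - z) ≠ 0 := by
  have hsub {v : V} (hv : q v ≠ 0) : q (orthogonalReflection q hv y - z) =
      polar q y v * polar q z v / q v - polar q y z := by
    rw [map_sub_eq_add_sub_polar, QuadraticMap.IsometryEquiv.map_app, hqy, hqz,
      orthogonalReflection_apply, polar_sub_left, polar_smul_left, smul_eq_mul,
      polar_comm q v y, polar_comm q v z]
    ring
  by_cases hyz : polar q y z = 0
  · obtain ⟨v, hv, hxv, hyv, hzv⟩ :
        ∃ v, q v ≠ 0 ∧ polar q x v = 0 ∧ polar q y v ≠ 0 ∧ polar q z v ≠ 0 := by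
      by_cases hxy : polar q x y = 0
      · exact exists_anisotropic_polar_ne_zero_of_orthogonal hq hy hz hqy hxy
          ((polar_comm q z y).trans hyz)
      · exact exists_anisotropic_polar_ne_zero_of_not_orthogonal hq hV hqx hxy hxyz
    refine ⟨v, hv, hxv, ?_⟩
    rw [hsub, hyz, sub_zero]
    exact div_ne_zero (mul_ne_zero hyv hzv) hv
  · obtain ⟨v, hv, hxv, hzv⟩ := exists_anisotropic_polar_eq_zero hq hV x z
    refine ⟨v, hv, hxv, ?_⟩
    rwa [hsub, hzv, mul_zero, zero_div, zero_sub, neg_ne_zero]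

theorem exists_isometryEquiv_det_eq_one_apply_eq (hq : (polarBilin q).Nondegenerate)
    (hV : 5 ≤ Module.finrank k V) (hy : y ∉ Submodule.span k {x})
    (hz : z ∉ Submodule.span k {x}) (hqx : q x = 0) (hqy : q y = 0) (hqz : q z = 0)
    (hxyz : polar q x y = polar q x z) :
    ∃ f : q.IsometryEquiv q, LinearMap.det (f.toLinearEquiv : V →ₗ[k] V) = 1 ∧
      f x = x ∧ f y = z := by
  obtain ⟨v, hv, hxv, hd⟩ := exists_anisotropic_map_orthogonalReflection_sub_ne_zero
    hq hV hy hz hqx hqy hqz hxyz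
  let s := orthogonalReflection q hv
  have hsx : s x = x := orthogonalReflection_apply_of_polar_eq_zero hv hxv
  have hxd : polar q x (s y - z) = 0 := by
    rw [polar_sub_right, ← hxyz, sub_eq_zero]
    nth_rw 1 [← hsx]
    exact polar_isometryEquiv_apply s x y
  refine ⟨s.trans (orthogonalReflection q hd), ?_, ?_, ?_⟩
  · change LinearMap.det ((orthogonalReflection q hd).toLinearEquiv.toLinearMap ∘ₗ
      s.toLinearEquiv.toLinearMap) = 1
    rw [LinearMap.det_comp, det_orthogonalReflection, det_orthogonalReflection, neg_mul_neg,
      one_mul]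
  · change orthogonalReflection q hd (s x) = x
    rw [hsx, orthogonalReflection_apply_of_polar_eq_zero hd hxd]
  · exact orthogonalReflection_sub_apply ((s.map_app y).trans (hqy.trans hqz.symm)) hd

end QuadraticSpace

section ProjectiveQuadric

variable {k V : Type*} [Field k] [AddCommGroup V] [Module k V]

/-- The quadric `Q = {q = 0}` in the projective space of lines of `V`, cut out on the chosen
representatives of the lines; `mk_mem_projectiveQuadric` shows that the choice is immaterial. -/
def projectiveQuadric (q : QuadraticForm k V) : Set (Projectivization k V) :=
  {p | q p.rep = 0}

/-- The section of the quadric `q = 0` by the polar hyperplane of `x`. For isotropic `x` this is the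
tangent hyperplane section at `[x]`. -/
def polarSection (q : QuadraticForm k V) (x : V) : Set (Projectivization k V) :=
  {p | q p.rep = 0 ∧ polar q x p.rep = 0}

variable {q : QuadraticForm k V} {x v : V}

theorem mk_mem_projectiveQuadric (hv : v ≠ 0) :
    Projectivization.mk k v hv ∈ projectiveQuadric q ↔ q v = 0 := by
  obtain ⟨a, ha⟩ := Projectivization.exists_smul_eq_mk_rep k v hv
  simp [projectiveQuadric, ← ha, Units.smul_def, QuadraticMap.map_smul]

theorem mk_mem_polarSection (hv : v ≠ 0) :
    Projectivization.mk k v hv ∈ polarSection q x ↔ q v = 0 ∧ polar q x v = 0 := by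
  obtain ⟨a, ha⟩ := Projectivization.exists_smul_eq_mk_rep k v hv
  simp [polarSection, ← ha, Units.smul_def, QuadraticMap.map_smul, polar_smul_right]

theorem mk_mem_polarSection_self (hx : x ≠ 0) (hqx : q x = 0) :
    Projectivization.mk k x hx ∈ polarSection q x :=
  (mk_mem_polarSection hx).2 ⟨hqx, by rw [polar_self, hqx, smul_zero]⟩

end ProjectiveQuadric

section Orbits

variable {k : Type*} [Field k] {N : ℕ} {q : QuadraticForm k (Fin N → k)}
  {x y z : Fin N → k} {p p' : Projectivization k (Fin N → k)}

theorem mk_mem_stabOrbit_mk_iff (hy : y ≠ 0) (hz : z ≠ 0) :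
    Projectivization.mk k z hz ∈ stabOrbit q x (Projectivization.mk k y hy) ↔
      ∃ f : q.IsometryEquiv q,
        LinearMap.det (f.toLinearEquiv : (Fin N → k) →ₗ[k] (Fin N → k)) = 1 ∧
        (∃ c : k, f x = c • x) ∧ ∃ a : k, f y = a • z := by
  simp only [stabOrbit, Set.mem_ofPred_eq, Projectivization.map_mk,
    Projectivization.mk_eq_mk_iff', LinearEquiv.coe_coe]
  constructor
  · rintro ⟨f, hf, hdet, hfx, a, ha⟩
    exact ⟨⟨f, hf⟩, hdet, hfx, a, ha.symm⟩
  · rintro ⟨f, hdet, hfx, a, ha⟩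
    exact ⟨f.toLinearEquiv, f.map_app, hdet, hfx, a, ha.symm⟩

theorem mem_projectiveQuadric_iff_of_mem_stabOrbit (h : p' ∈ stabOrbit q x p) :
    p' ∈ projectiveQuadric q ↔ p ∈ projectiveQuadric q := by
  induction p using Projectivization.ind with | _ y hy
  induction p' using Projectivization.ind with | _ z hz
  obtain ⟨f, -, -, a, hfy⟩ := (mk_mem_stabOrbit_mk_iff hy hz).1 h
  have ha : a ≠ 0 := ne_zero_of_apply_eq_smul f.toLinearEquiv hy hfy
  rw [mk_mem_projectiveQuadric, mk_mem_projectiveQuadric, ← f.map_app y, hfy,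
    QuadraticMap.map_smul, smul_eq_zero_iff_right (mul_ne_zero ha ha)]

theorem mem_polarSection_iff_of_mem_stabOrbit (hx : x ≠ 0) (h : p' ∈ stabOrbit q x p) :
    p' ∈ polarSection q x ↔ p ∈ polarSection q x := by
  induction p using Projectivization.ind with | _ y hy
  induction p' using Projectivization.ind with | _ z hz
  have hQ := mem_projectiveQuadric_iff_of_mem_stabOrbit h
  obtain ⟨f, -, ⟨c, hfx⟩, a, hfy⟩ := (mk_mem_stabOrbit_mk_iff hy hz).1 h
  have hc : c ≠ 0 := ne_zero_of_apply_eq_smul f.toLinearEquiv hx hfx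
  have ha : a ≠ 0 := ne_zero_of_apply_eq_smul f.toLinearEquiv hy hfy
  rw [mk_mem_projectiveQuadric, mk_mem_projectiveQuadric] at hQ
  rw [mk_mem_polarSection, mk_mem_polarSection, hQ, ← polar_isometryEquiv_apply f x y, hfx, hfy,
    polar_smul_left, polar_smul_right, smul_eq_zero_iff_right hc, smul_eq_zero_iff_right ha]

theorem eq_mk_iff_of_mem_stabOrbit (hx : x ≠ 0) (h : p' ∈ stabOrbit q x p) :
    p' = Projectivization.mk k x hx ↔ p = Projectivization.mk k x hx := by
  obtain ⟨f, -, -, ⟨c, hfx⟩, rfl⟩ := h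
  have hfix : Projectivization.map (f : (Fin N → k) →ₗ[k] (Fin N → k)) f.injective
      (Projectivization.mk k x hx) = Projectivization.mk k x hx := by
    rw [Projectivization.map_mk, Projectivization.mk_eq_mk_iff']
    exact ⟨c, hfx.symm⟩
  nth_rw 1 [← hfix]
  exact (Projectivization.map_injective _ f.injective).eq_iff

theorem mem_stabOrbit_self (q : QuadraticForm k (Fin N → k)) (x : Fin N → k)
    (p : Projectivization k (Fin N → k)) : p ∈ stabOrbit q x p := by
  induction p using Projectivization.ind with | _ y hy
  exact (mk_mem_stabOrbit_mk_iff hy hy).2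
    ⟨QuadraticMap.IsometryEquiv.refl q, LinearMap.det_id, ⟨1, (one_smul k x).symm⟩,
      1, (one_smul k y).symm⟩

theorem mem_stabOrbit_of_mem_projectiveQuadric (hN : 5 ≤ N) (hq : (polarBilin q).Nondegenerate)
    (hx : x ≠ 0) (hqx : q x = 0) (hp : p ∈ projectiveQuadric q) (hp' : p' ∈ projectiveQuadric q)
    (hpx : p ≠ Projectivization.mk k x hx) (hpx' : p' ≠ Projectivization.mk k x hx)
    (hH : p ∈ polarSection q x ↔ p' ∈ polarSection q x) : p' ∈ stabOrbit q x p := by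
  induction p using Projectivization.ind with | _ y hy
  induction p' using Projectivization.ind with | _ z hz
  rw [mk_mem_projectiveQuadric] at hp hp'
  rw [ne_eq, Projectivization.mk_eq_mk_iff', ← Submodule.mem_span_singleton] at hpx hpx'
  simp only [mk_mem_polarSection, hp, hp', true_and] at hH
  obtain ⟨a, ha, hxyz⟩ := exists_ne_zero_eq_mul hH
  obtain ⟨f, hdet, hfx, hfy⟩ := exists_isometryEquiv_det_eq_one_apply_eq (z := a • z) hq
    (by rwa [Module.finrank_fin_fun]) hpx (by rwa [Submodule.smul_mem_iff _ ha]) hqx hp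
    (by rw [QuadraticMap.map_smul, hp', smul_zero]) (by rwa [polar_smul_right, smul_eq_mul])
  exact (mk_mem_stabOrbit_mk_iff hy hz).2 ⟨f, hdet, ⟨1, by rw [hfx, one_smul]⟩, a, hfy⟩

theorem stabOrbit_mk_self (q : QuadraticForm k (Fin N → k)) (hx : x ≠ 0) :
    stabOrbit q x (Projectivization.mk k x hx) = {Projectivization.mk k x hx} := by
  ext p
  refine ⟨fun h ↦ (eq_mk_iff_of_mem_stabOrbit hx h).2 rfl, ?_⟩
  rintro rfl
  exact mem_stabOrbit_self q x _

theorem stabOrbit_eq_of_ne (hN : 5 ≤ N) (hq : (polarBilin q).Nondegenerate) (hx : x ≠ 0)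
    (hqx : q x = 0) (hp : p ∈ projectiveQuadric q) (hpx : p ≠ Projectivization.mk k x hx) :
    stabOrbit q x p = {p' | p' ∈ projectiveQuadric q ∧ p' ≠ Projectivization.mk k x hx ∧
      (p ∈ polarSection q x ↔ p' ∈ polarSection q x)} := by
  ext p'
  refine ⟨fun h ↦ ⟨?_, ?_, ?_⟩, fun ⟨hp', hpx', hH⟩ ↦
    mem_stabOrbit_of_mem_projectiveQuadric hN hq hx hqx hp hp' hpx hpx' hH⟩
  · exact (mem_projectiveQuadric_iff_of_mem_stabOrbit h).2 hp
  · exact (eq_mk_iff_of_mem_stabOrbit hx h).not.2 hpx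
  · exact (mem_polarSection_iff_of_mem_stabOrbit hx h).symm

theorem stmt0_general (hN : 5 ≤ N) (hq : (polarBilin q).SeparatingLeft) (hx : x ≠ 0)
    (hqx : q x = 0) :
    stabOrbit q x (Projectivization.mk k x hx) = {Projectivization.mk k x hx} ∧
    (∀ p ∈ polarSection q x \ {Projectivization.mk k x hx},
        stabOrbit q x p = polarSection q x \ {Projectivization.mk k x hx}) ∧
    (∀ p ∈ projectiveQuadric q \ polarSection q x,
        stabOrbit q x p = projectiveQuadric q \ polarSection q x) ∧
    projectiveQuadric q = {Projectivization.mk k x hx} ∪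
      (polarSection q x \ {Projectivization.mk k x hx}) ∪
      (projectiveQuadric q \ polarSection q x) := by
  have hB := (polarBilin_isRefl q).nondegenerate_iff_separatingLeft.2 hq
  have hsub : polarSection q x ⊆ projectiveQuadric q := fun p hp ↦ hp.1
  have hxH : Projectivization.mk k x hx ∈ polarSection q x := mk_mem_polarSection_self hx hqx
  refine ⟨stabOrbit_mk_self q hx, fun p ⟨hpH, hpx⟩ ↦ ?_, fun p ⟨hpQ, hpH⟩ ↦ ?_, ?_⟩
  · rw [stabOrbit_eq_of_ne hN hB hx hqx (hsub hpH) hpx]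
    ext p'
    exact ⟨fun ⟨_, hpx', hH⟩ ↦ ⟨hH.1 hpH, hpx'⟩,
      fun ⟨hpH', hpx'⟩ ↦ ⟨hsub hpH', hpx', iff_of_true hpH hpH'⟩⟩
  · rw [stabOrbit_eq_of_ne hN hB hx hqx hpQ (ne_of_mem_of_not_mem hxH hpH).symm]
    ext p'
    exact ⟨fun ⟨hpQ', _, hH⟩ ↦ ⟨hpQ', hH.not.1 hpH⟩, fun ⟨hpQ', hpH'⟩ ↦
      ⟨hpQ', (ne_of_mem_of_not_mem hxH hpH').symm, iff_of_false hpH hpH'⟩⟩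
  · rw [Set.union_sdiff_cancel (Set.singleton_subset_iff.2 hxH), Set.union_sdiff_cancel hsub]

end Orbits

/-- The orbits of the stabilizer `G_x ⊆ SO(q)` of an isotropic projective point `[x]`
on the projective quadric `Q = {q = 0}` are exactly `{[x]}`, `H ∖ {[x]}` and `Q ∖ H`,
where `H` is the tangent hyperplane section `{[y] ∈ Q | B_q(x,y) = 0}`. -/
theorem stmt0 (k : Type*) [Field k] [IsAlgClosed k] [CharZero k]
    (n : ℕ) (hn : 3 ≤ n)
    (q : QuadraticForm k (Fin (n + 2) → k))
    (hq : ∀ v, (∀ w, polar q v w = 0) → v = 0)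
    (x : Fin (n + 2) → k) (hx : x ≠ 0) (hqx : q x = 0)
    (Qs H : Set (Projectivization k (Fin (n + 2) → k)))
    (hQs : Qs = {p | q p.rep = 0})
    (hH : H = {p | q p.rep = 0 ∧ polar q x p.rep = 0}) :
    stabOrbit q x (Projectivization.mk k x hx) = {Projectivization.mk k x hx} ∧
    (∀ p ∈ H \ {Projectivization.mk k x hx},
        stabOrbit q x p = H \ {Projectivization.mk k x hx}) ∧
    (∀ p ∈ Qs \ H, stabOrbit q x p = Qs \ H) ∧
    Qs = {Projectivization.mk k x hx} ∪ (H \ {Projectivization.mk k x hx}) ∪ (Qs \ H) := by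
  subst hQs hH
  exact stmt0_general (by omega) hq hx hqx
end

section
/- Let K be a field and let a ≥ 1 and n ≥ 1 be integers. Let M = (m_{ij})_{0 ≤ i,j ≤ n} be an (n+1)×(n+1) matrix with entries m_{ij} ∈ K[t], and suppose that in the matrix ring over the rational function field K(t) one has M(1/t) · D = D · M(t), where D = diag(1, …, 1, t^{−a}) and M(1/t) denotes the matrix obtained by substituting 1/t for t in every entry. Then: (i) m_{ij} is a constant polynomial for all 0 ≤ i, j ≤ n−1 and also m_{nn} is constant; (ii) m_{in} = 0 for all 0 ≤ i ≤ n−1; and (iii) m_{nj} has degree at most a for all 0 ≤ j ≤ n−1. -/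
/-!
An endomorphism of `⨁ O(w i)` over `ℙ¹` is a pair of polynomial matrices `M(t)`, `N(1/t)` with
`N(1/t) * D = D * M(t)` for `D = diag(t ^ (-w i))`; the theorem is about the case `N = M`. On
entries the condition reads `q(1/t) = t ^ (-k) * p(t)` with `k = w i - w j`. Multiplying by `t ^ e`,
where `e = deg q`, turns `q(1/t)` into the reversed polynomial of `q`, whose degree is at most `e`,
so that `p = 0` or `deg p + e - k ≤ e`, that is, `deg p ≤ k`. Here `k` is `0`, `-a` or `a` according
to the block.
-/

section Transcendental

open Polynomial

variable {R A : Type*} [CommRing R] [CommRing A] [Algebra R A]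

lemma aeval_units_inv_mul_pow_natDegree (x : Aˣ) (p : R[X]) :
    aeval (↑x⁻¹ : A) p * (x : A) ^ p.natDegree = aeval (x : A) p.reverse := by
  have h := eval₂_reverse_mul_pow (algebraMap R A) (↑x⁻¹ : A) p
  rw [invOf_units, inv_inv, ← aeval_def, ← aeval_def] at h
  rw [← h, mul_assoc, ← mul_pow, Units.inv_mul, one_pow, mul_one]

variable {x : Aˣ}

lemma natDegree_le_of_aeval_units_inv_eq (hx : Transcendental R (x : A)) {p q : R[X]} (hp : p ≠ 0)
    {k : ℤ} (h : aeval (↑x⁻¹ : A) q = ↑(x ^ (-k)) * aeval (x : A) p) :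
    (p.natDegree : ℤ) ≤ k := by
  have := Nontrivial.of_polynomial_ne hp
  obtain ⟨u, v, huv⟩ : ∃ u v : ℕ, -k + (q.natDegree + u : ℕ) = v :=
    ⟨k.toNat, q.natDegree + (-k).toNat, by lia⟩
  have reverse_mul_eq : q.reverse * X ^ u = p * X ^ v := by
    apply transcendental_iff_injective.mp hx
    have hpow : (↑(x ^ (-k)) : A) * (x : A) ^ (q.natDegree + u) = (x : A) ^ v := by
      norm_cast
      rw [← zpow_natCast, ← zpow_add, huv, zpow_natCast]
    calc aeval (x : A) (q.reverse * X ^ u)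
      _ = aeval (↑x⁻¹ : A) q * (x : A) ^ (q.natDegree + u) := by
        rw [map_mul, aeval_X_pow, ← aeval_units_inv_mul_pow_natDegree, mul_assoc, ← pow_add]
      _ = aeval (x : A) (p * X ^ v) := by
        rw [h, mul_right_comm, hpow, map_mul, aeval_X_pow, mul_comm]
  have hdeg : p.natDegree + v ≤ q.natDegree + u := by
    rw [← natDegree_mul_X_pow v hp, ← reverse_mul_eq]
    exact natDegree_mul_le_of_le (reverse_natDegree_le q) (natDegree_X_pow_le u)
  lia

/-- The matrices `M(t)` and `N(1/t)` of polynomials over `R` satisfy the gluing condition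
`N(1/t) * D = D * M(t)` with `D = diag(t ^ (-w i))`, that is, they describe an endomorphism of the
bundle `⨁ O(w i)` over `ℙ¹` on the two standard charts. The coordinate `t` is encoded as a unit `x`
of an arbitrary `R`-algebra, such as `RatFunc.X`, and is meant to be transcendental over `R`. -/
def IsGluingCompatible {ι : Type*} [Fintype ι] [DecidableEq ι] (x : Aˣ) (w : ι → ℤ)
    (N M : Matrix ι ι R[X]) : Prop :=
  N.map (aeval (↑x⁻¹ : A)) * Matrix.diagonal (fun i => (↑(x ^ (-w i)) : A)) =
    Matrix.diagonal (fun i => (↑(x ^ (-w i)) : A)) * M.map (aeval (x : A))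

namespace IsGluingCompatible

variable {ι : Type*} [Fintype ι] [DecidableEq ι] {w : ι → ℤ} {N M : Matrix ι ι R[X]} {i j : ι}

lemma aeval_units_inv_eq (hM : IsGluingCompatible x w N M) (i j : ι) :
    aeval (↑x⁻¹ : A) (N i j) = ↑(x ^ (-(w i - w j))) * aeval (x : A) (M i j) := by
  have entry := congrFun₂ hM i j
  rw [Matrix.mul_diagonal, Matrix.diagonal_mul, Matrix.map_apply, Matrix.map_apply] at entry
  rw [neg_sub, sub_eq_neg_add, zpow_add, Units.val_mul, mul_right_comm, ← entry, mul_assoc,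
    ← Units.val_mul, ← zpow_add, neg_add_cancel, zpow_zero, Units.val_one, mul_one]

lemma eq_zero_of_lt (hx : Transcendental R (x : A)) (hM : IsGluingCompatible x w N M)
    (hw : w i < w j) : M i j = 0 := by
  by_contra hij
  have := natDegree_le_of_aeval_units_inv_eq hx hij (hM.aeval_units_inv_eq i j)
  lia

lemma natDegree_le_sub (hx : Transcendental R (x : A)) (hM : IsGluingCompatible x w N M)
    (hw : w j ≤ w i) : ((M i j).natDegree : ℤ) ≤ w i - w j := by
  rcases eq_or_ne (M i j) 0 with hij | hij
  · simpa [hij] using hw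
  · exact natDegree_le_of_aeval_units_inv_eq hx hij (hM.aeval_units_inv_eq i j)

lemma exists_eq_C_of_eq (hx : Transcendental R (x : A)) (hM : IsGluingCompatible x w N M)
    (hw : w i = w j) : ∃ c : R, M i j = C c := by
  have hdeg := hM.natDegree_le_sub hx hw.ge
  exact ⟨_, eq_C_of_natDegree_le_zero (by lia)⟩

end IsGluingCompatible

theorem stmt3_general (hx : Transcendental R (x : A)) {a n : ℕ} (ha : 1 ≤ a)
    {N M : Matrix (Fin (n + 1)) (Fin (n + 1)) R[X]}
    (hM : N.map (aeval (↑x⁻¹ : A)) *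
          Matrix.diagonal (fun i : Fin (n + 1) => if (i : ℕ) = n then (↑(x ^ a)⁻¹ : A) else 1) =
        Matrix.diagonal (fun i : Fin (n + 1) => if (i : ℕ) = n then (↑(x ^ a)⁻¹ : A) else 1) *
          M.map (aeval (x : A))) :
    (∀ i j : Fin (n + 1), (i : ℕ) < n → (j : ℕ) < n → ∃ c : R, M i j = C c) ∧
    (∃ c : R, M (Fin.last n) (Fin.last n) = C c) ∧
    (∀ i : Fin (n + 1), (i : ℕ) < n → M i (Fin.last n) = 0) ∧
    (∀ j : Fin (n + 1), (j : ℕ) < n → (M (Fin.last n) j).natDegree ≤ a) := by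
  let w (i : Fin (n + 1)) : ℤ := if (i : ℕ) = n then a else 0
  have w_last : w (Fin.last n) = a := if_pos rfl
  have w_of_lt {i : Fin (n + 1)} (hi : (i : ℕ) < n) : w i = 0 := if_neg hi.ne
  have hD (i : Fin (n + 1)) :
      (if (i : ℕ) = n then (↑(x ^ a)⁻¹ : A) else 1) = ↑(x ^ (-w i)) := by
    by_cases hi : (i : ℕ) = n <;> simp [w, hi]
  have hMw : IsGluingCompatible x w N M := by
    simpa only [IsGluingCompatible, hD] using hM
  refine ⟨fun i j hi hj => hMw.exists_eq_C_of_eq hx (by rw [w_of_lt hi, w_of_lt hj]),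
    hMw.exists_eq_C_of_eq hx rfl, fun i hi => hMw.eq_zero_of_lt hx ?_, fun j hj => ?_⟩
  · rw [w_of_lt hi, w_last]
    lia
  · have hdeg := hMw.natDegree_le_sub hx (i := Fin.last n) (j := j) (by simp [w_last, w_of_lt hj])
    rw [w_last, w_of_lt hj] at hdeg
    lia

end Transcendental

/-- The gluing condition `M(1/t)·D = D·M(t)`, `D = diag(1,…,1,t^{−a})`, for a matrix of
polynomials forces: the upper-left `n × n` block and the lower-right entry to be constant,
the upper-right column (above the last entry) to vanish, and the remaining entries of the
last row to have degree at most `a`. -/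
theorem stmt3 (K : Type*) [Field K] (a n : ℕ) (ha : 1 ≤ a) (hn : 1 ≤ n)
    (M : Matrix (Fin (n + 1)) (Fin (n + 1)) (Polynomial K))
    (hM : (M.map fun p => Polynomial.aeval ((RatFunc.X : RatFunc K)⁻¹) p) *
          Matrix.diagonal (fun i : Fin (n + 1) =>
            if (i : ℕ) = n then ((RatFunc.X : RatFunc K) ^ a)⁻¹ else 1) =
          Matrix.diagonal (fun i : Fin (n + 1) =>
            if (i : ℕ) = n then ((RatFunc.X : RatFunc K) ^ a)⁻¹ else 1) *
          (M.map fun p => algebraMap (Polynomial K) (RatFunc K) p)) :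
    (∀ i j : Fin (n + 1), (i : ℕ) < n → (j : ℕ) < n → ∃ c : K, M i j = Polynomial.C c) ∧
    (∃ c : K, M (Fin.last n) (Fin.last n) = Polynomial.C c) ∧
    (∀ i : Fin (n + 1), (i : ℕ) < n → M i (Fin.last n) = 0) ∧
    (∀ j : Fin (n + 1), (j : ℕ) < n → (M (Fin.last n) j).natDegree ≤ a) := by
  exact stmt3_general (A := RatFunc K) (x := .mk0 RatFunc.X RatFunc.X_ne_zero) (N := M)
    RatFunc.transcendental_X ha (by simpa [← RatFunc.aeval_X_left_eq_algebraMap] using hM)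
end

section
/- Let k be an algebraically closed field of characteristic 0, let n ≥ 3 and a ≥ 1 be integers, and let g ∈ k[t₀,t₁] be a nonzero homogeneous polynomial of degree 2a. In the polynomial ring k[t₀,t₁][x₀,…,xₙ] set q_g = x₁² − x₀x₂ + x₃² + ⋯ + x_{n−1}² + g·xₙ² and q₀ = x₁² − x₀x₂ + x₃² + ⋯ + x_{n−1}². Let α be the (n+1)×(n+1) matrix over k[t₀,t₁] whose upper-left n×n block is a constant invertible matrix M ∈ GL_n(k), whose upper-right column is zero, whose lower-left row is (f₀, …, f_{n−1}) with each fᵢ ∈ k[t₀,t₁] homogeneous of degree a, and whose lower-right entry is 1. Then there exists λ ∈ k ∖ {0} such that q_g(α·(x₀,…,xₙ)) = λ · q_g(x₀,…,xₙ) identically if and only if f₀ = ⋯ = f_{n−1} = 0 and M preserves q₀ (i.e. q₀(M·(x₀,…,x_{n−1})) = q₀(x₀,…,x_{n−1}) identically); and in that case necessarily λ = 1. -/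
/-- The quadratic form `q₀(x) = x₁² − x₀x₂ + x₃² + ⋯ + x_{n−1}²` on `kⁿ` (`n ≥ 3`). -/
def q0 {k : Type*} [Field k] {n : ℕ} (hn : 3 ≤ n) (x : Fin n → k) : k :=
  x ⟨1, by omega⟩ ^ 2 - x ⟨0, by omega⟩ * x ⟨2, by omega⟩ +
    ∑ i : Fin n, if 3 ≤ (i : ℕ) then x i ^ 2 else 0

/-- The value at `(t, x)` of the defining polynomial
`q_g = x₁² − x₀x₂ + x₃² + ⋯ + x_{n−1}² + g(t₀,t₁)·xₙ²` of the Umemura quadric fibration. -/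
noncomputable def qgVal {k : Type*} [Field k] {n : ℕ} (hn : 3 ≤ n)
    (g : MvPolynomial (Fin 2) k) (t : Fin 2 → k) (x : Fin (n + 1) → k) : k :=
  q0 hn (fun i : Fin n => x i.castSucc) + MvPolynomial.eval t g * x (Fin.last n) ^ 2

/-- The action on coordinates of the block matrix `α` with upper-left block `M ∈ GL_n(k)`,
zero upper-right column, lower-left row `(f₀,…,f_{n−1})` and lower-right entry `1`,
evaluated at the parameter `t`. -/
noncomputable def blockAct {k : Type*} [Field k] {n : ℕ} (M : Matrix (Fin n) (Fin n) k)
    (f : Fin n → MvPolynomial (Fin 2) k) (t : Fin 2 → k) (x : Fin (n + 1) → k) :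
    Fin (n + 1) → k := fun i =>
  if h : (i : ℕ) < n then ∑ j : Fin n, M ⟨i, h⟩ j * x j.castSucc
  else (∑ j : Fin n, MvPolynomial.eval t (f j) * x j.castSucc) + x (Fin.last n)

/-! For fixed `t` and fixed `y = (x₀, …, x_{n−1})`, the identity `q_g ∘ α = λ q_g` reads
`q₀(My) + g(t) (f(t)·y + s)² = λ (q₀(y) + g(t) s²)` for all values `s` of the last coordinate.
Comparing the coefficients of `s²`, `s` and `1` gives `g(t) = λ g(t)`, `g(t) (f(t)·y) = 0` and
`q₀(My) = λ q₀(y)`. As `g ≠ 0`, letting `t` vary gives `λ = 1` and `f = 0`. -/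

section CompletedSquare

open MvPolynomial

variable {R : Type*} [CommRing R]

lemma forall_add_mul_add_sq_eq_iff [NoZeroDivisors R] [NeZero (2 : R)] {p q b c lam : R} :
    (∀ s, p + c * (b + s) ^ 2 = lam * (q + c * s ^ 2)) ↔
      c = lam * c ∧ c * b = 0 ∧ p = lam * q := by
  constructor
  · intro h
    have sq_coeff : c = lam * c :=
      mul_left_cancel₀ (two_ne_zero' R) (by linear_combination h 1 + h (-1) - 2 * h 0)
    have linear_coeff : c * b = 0 := by
      have four_mul : 2 * (2 * (c * b)) = 0 := by linear_combination h 1 - h (-1)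
      simpa only [mul_eq_zero, two_ne_zero, false_or] using four_mul
    exact ⟨sq_coeff, linear_coeff, by linear_combination h 0 - b * linear_coeff⟩
  · rintro ⟨sq_coeff, linear_coeff, const_coeff⟩ s
    linear_combination const_coeff + (b + 2 * s) * linear_coeff + s ^ 2 * sq_coeff

variable [IsDomain R] [Infinite R] {σ : Type*} {g : MvPolynomial σ R}

lemma forall_eval_eq_mul_eval_iff_eq_one (hg : g ≠ 0) {lam : R} :
    (∀ t, eval t g = lam * eval t g) ↔ lam = 1 := by
  obtain ⟨t, ht⟩ : ∃ t, eval t g ≠ 0 := by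
    simpa only [ne_eq, MvPolynomial.funext_iff, map_zero, not_forall] using hg
  exact ⟨fun h => (right_eq_mul₀ ht).mp (h t), fun h _ => by rw [h, one_mul]⟩

lemma forall_eval_mul_eval_eq_zero_iff (hg : g ≠ 0) {f : MvPolynomial σ R} :
    (∀ t, eval t g * eval t f = 0) ↔ f = 0 := by
  rw [← mul_eq_zero_iff_left hg, MvPolynomial.funext_iff]
  simp only [map_mul, map_zero]

theorem forall_add_eval_mul_add_sq_eq_iff [NeZero (2 : R)] {V : Type*} [Nonempty V]
    (hg : g ≠ 0) {p q : V → R} {l : V → MvPolynomial σ R} {lam : R} :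
    (∀ t y s, p y + eval t g * (eval t (l y) + s) ^ 2 = lam * (q y + eval t g * s ^ 2)) ↔
      lam = 1 ∧ (∀ y, l y = 0) ∧ ∀ y, p y = q y := by
  calc
    _ ↔ (∀ t, eval t g = lam * eval t g) ∧ (∀ y t, eval t g * eval t (l y) = 0) ∧
          ∀ y, p y = lam * q y := by
        simp only [forall_add_mul_add_sq_eq_iff, forall_and, forall_const]
        rw [forall_comm (α := σ → R) (β := V)]
    _ ↔ lam = 1 ∧ (∀ y, l y = 0) ∧ ∀ y, p y = lam * q y := by
        simp only [forall_eval_eq_mul_eval_iff_eq_one hg, forall_eval_mul_eval_eq_zero_iff hg]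
    _ ↔ _ := and_congr_right fun hlam => by simp only [hlam, one_mul]

end CompletedSquare

lemma forall_sum_smul_eq_zero_iff {ι R M : Type*} [Fintype ι] [Semiring R] [AddCommMonoid M]
    [Module R M] {f : ι → M} : (∀ y : ι → R, ∑ j, y j • f j = 0) ↔ ∀ j, f j = 0 := by
  classical
  refine ⟨fun h j => ?_, fun h y => by simp only [h, smul_zero, Finset.sum_const_zero]⟩
  simpa [Pi.single_apply] using h (Pi.single j 1)

lemma forall_fin_snoc {n : ℕ} {α : Fin (n + 1) → Type*} {P : (∀ i, α i) → Prop} :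
    (∀ x, P x) ↔ ∀ (y : ∀ i : Fin n, α i.castSucc) (s : α (Fin.last n)), P (Fin.snoc y s) :=
  ⟨fun h _ _ => h _, fun h x => Fin.snocCases h x⟩

section QuadricFibration

open MvPolynomial

variable {k : Type*} [Field k] {n : ℕ}

lemma qgVal_snoc (hn : 3 ≤ n) (g : MvPolynomial (Fin 2) k) (t : Fin 2 → k) (y : Fin n → k)
    (s : k) : qgVal hn g t (Fin.snoc (α := fun _ => k) y s) = q0 hn y + eval t g * s ^ 2 := by
  simp only [qgVal, Fin.snoc_castSucc, Fin.snoc_last]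

lemma blockAct_snoc (M : Matrix (Fin n) (Fin n) k) (f : Fin n → MvPolynomial (Fin 2) k)
    (t : Fin 2 → k) (y : Fin n → k) (s : k) :
    blockAct M f t (Fin.snoc (α := fun _ => k) y s) =
      Fin.snoc (α := fun _ => k) (M.mulVec y) (eval t (∑ j, y j • f j) + s) := by
  funext i
  cases i using Fin.lastCases with
  | last => simp [blockAct, mul_comm]
  | cast i => simp [blockAct, Matrix.mulVec, dotProduct]

theorem stmt4_general [Infinite k] [NeZero (2 : k)] (hn : 3 ≤ n)
    {g : MvPolynomial (Fin 2) k} (hg : g ≠ 0) (M : Matrix (Fin n) (Fin n) k)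
    (f : Fin n → MvPolynomial (Fin 2) k) (lam : k) :
    (∀ (t : Fin 2 → k) (x : Fin (n + 1) → k),
        qgVal hn g t (blockAct M f t x) = lam * qgVal hn g t x) ↔
      lam = 1 ∧ (∀ j, f j = 0) ∧ ∀ y : Fin n → k, q0 hn (M.mulVec y) = q0 hn y := by
  simp only [forall_fin_snoc (n := n), blockAct_snoc, qgVal_snoc]
  rw [forall_add_eval_mul_add_sq_eq_iff hg, forall_sum_smul_eq_zero_iff]

end QuadricFibration

/-- The block matrix `α` rescales the equation `q_g` by some nonzero `λ` identically
if and only if `f₀ = ⋯ = f_{n−1} = 0` and `M` preserves `q₀`; and in that case `λ = 1`. -/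
theorem stmt4 (k : Type*) [Field k] [IsAlgClosed k] [CharZero k]
    (n a : ℕ) (hn : 3 ≤ n) (ha : 1 ≤ a)
    (g : MvPolynomial (Fin 2) k) (hg0 : g ≠ 0) (hg : g.IsHomogeneous (2 * a))
    (M : Matrix (Fin n) (Fin n) k) (hM : IsUnit M)
    (f : Fin n → MvPolynomial (Fin 2) k) (hf : ∀ j, (f j).IsHomogeneous a) :
    ((∃ lam : k, lam ≠ 0 ∧
        ∀ (t : Fin 2 → k) (x : Fin (n + 1) → k),
          qgVal hn g t (blockAct M f t x) = lam * qgVal hn g t x) ↔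
      ((∀ j, f j = 0) ∧ ∀ y : Fin n → k, q0 hn (M.mulVec y) = q0 hn y)) ∧
    (∀ lam : k, lam ≠ 0 →
      (∀ (t : Fin 2 → k) (x : Fin (n + 1) → k),
        qgVal hn g t (blockAct M f t x) = lam * qgVal hn g t x) → lam = 1) := by
  simp only [stmt4_general hn hg0]
  exact ⟨⟨fun ⟨_, _, _, h⟩ => h, fun h => ⟨1, one_ne_zero, rfl, h⟩⟩, fun _ _ h => h.1⟩
end

section
/- Let k be a field of characteristic 0, let n ≥ 3 be an integer, and let γ ∈ k[t]. Consider the polynomial F = x₁² − x₀x₂ + x₃² + ⋯ + x_{n−1}² + γ(t) in the n+1 variables x₀, …, x_{n−1}, t. Then a point p = (v₀, …, v_{n−1}, s) ∈ k^{n+1} satisfies F(p) = 0 together with the vanishing at p of all n+1 partial derivatives of F if and only if v₀ = ⋯ = v_{n−1} = 0 and s is a root of γ of multiplicity at least 2, i.e. γ(s) = γ'(s) = 0. -/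
/-!
In `F = Q(x) + γ(t)` the variables separate, so a singular point is one where `Q + γ`, the gradient
of `Q` and `γ'` all vanish. By Euler's identity the form `Q` vanishes wherever its gradient does,
so that `γ` vanishes there too. When `2` is not a zero divisor, the gradient of
`Q = x₁² + x₃² + ⋯ + x_{n-1}² - x₀x₂` vanishes only at the origin, its entries being the coordinates
up to order and factors `-1` and `2`.
-/

open MvPolynomial
open scoped nonZeroDivisors

section PartialDerivatives

variable {σ R : Type*} [CommSemiring R]

/-- `p` is a singular point of the hypersurface `F = 0` in affine space: `F` and all its partial
derivatives vanish at `p`. -/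
def IsSingularPoint (F : MvPolynomial σ R) (p : σ → R) : Prop :=
  eval p F = 0 ∧ ∀ i, eval p (pderiv i F) = 0

theorem pderiv_toMvPolynomial_self (l : σ) (γ : Polynomial R) :
    pderiv l (γ.toMvPolynomial l) = γ.derivative.toMvPolynomial l := by
  rw [Polynomial.toMvPolynomial, Derivation.map_aeval, pderiv_X_self, smul_eq_mul, mul_one]

theorem pderiv_toMvPolynomial_of_ne {i l : σ} (h : i ≠ l) (γ : Polynomial R) :
    pderiv i (γ.toMvPolynomial l) = 0 := by
  rw [Polynomial.toMvPolynomial, Derivation.map_aeval, pderiv_X_of_ne h.symm, smul_zero]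

theorem eval_eq_zero_of_forall_eval_pderiv_eq_zero [Finite σ] {Q : MvPolynomial σ R} {d : ℕ}
    (hQ : Q.IsHomogeneous d) (hd : (d : R) ∈ R⁰) {p : σ → R}
    (hp : ∀ i, eval p (pderiv i Q) = 0) : eval p Q = 0 := by
  cases nonempty_fintype σ
  have euler : (d : R) * eval p Q = 0 := by
    simpa [hp] using (congrArg (eval p) hQ.sum_X_mul_pderiv).symm
  exact (mul_left_mem_nonZeroDivisors_eq_zero_iff hd).1 euler

theorem forall_eval_pderiv_add_toMvPolynomial_eq_zero_iff {Q : MvPolynomial σ R} {l : σ}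
    (hl : pderiv l Q = 0) (γ : Polynomial R) (p : σ → R) :
    (∀ i, eval p (pderiv i (Q + γ.toMvPolynomial l)) = 0) ↔
      (∀ i, eval p (pderiv i Q) = 0) ∧ γ.derivative.eval (p l) = 0 := by
  have at_l : eval p (pderiv l (Q + γ.toMvPolynomial l)) = γ.derivative.eval (p l) := by
    rw [map_add, hl, zero_add, pderiv_toMvPolynomial_self, eval_toMvPolynomial]
  have off_l {i : σ} (hi : i ≠ l) :
      eval p (pderiv i (Q + γ.toMvPolynomial l)) = eval p (pderiv i Q) := by
    rw [map_add, pderiv_toMvPolynomial_of_ne hi, add_zero]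
  constructor
  · refine fun h ↦ ⟨fun i ↦ ?_, at_l ▸ h l⟩
    obtain rfl | hi := eq_or_ne i l
    · rw [hl, map_zero]
    · rw [← off_l hi, h i]
  · rintro ⟨hQ, hγ⟩ i
    obtain rfl | hi := eq_or_ne i l
    · rw [at_l, hγ]
    · rw [off_l hi, hQ i]

theorem isSingularPoint_add_toMvPolynomial_iff [Finite σ] {Q : MvPolynomial σ R} {d : ℕ}
    (hQ : Q.IsHomogeneous d) (hd : (d : R) ∈ R⁰) {l : σ} (hl : pderiv l Q = 0)
    (γ : Polynomial R) (p : σ → R) :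
    IsSingularPoint (Q + γ.toMvPolynomial l) p ↔
      (∀ i, eval p (pderiv i Q) = 0) ∧ γ.eval (p l) = 0 ∧ γ.derivative.eval (p l) = 0 := by
  rw [IsSingularPoint, forall_eval_pderiv_add_toMvPolynomial_eq_zero_iff hl, and_left_comm]
  refine and_congr_right fun hgrad ↦ ?_
  rw [map_add, eval_eq_zero_of_forall_eval_pderiv_eq_zero hQ hd hgrad, zero_add,
    eval_toMvPolynomial]

theorem pderiv_sum_X_sq_of_mem {s : Finset σ} {i : σ} (hi : i ∈ s) :
    pderiv i (∑ j ∈ s, X j ^ 2 : MvPolynomial σ R) = 2 * X i := by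
  rw [map_sum, Finset.sum_eq_single_of_mem i hi fun j _ hj ↦ by simp [pderiv_X_of_ne hj]]
  simp

theorem pderiv_sum_X_sq_of_notMem {s : Finset σ} {i : σ} (hi : i ∉ s) :
    pderiv i (∑ j ∈ s, X j ^ 2 : MvPolynomial σ R) = 0 := by
  rw [map_sum]
  refine Finset.sum_eq_zero fun j hj ↦ ?_
  simp [pderiv_X_of_ne (ne_of_mem_of_not_mem hj hi)]

end PartialDerivatives

section HyperbolicForm

variable {σ : Type*} (R : Type*) [CommRing R] (s : Finset σ) (a c : σ)

/-- The quadratic form `∑ i ∈ s, xᵢ² - xₐ x_c`, the orthogonal sum of squares and a hyperbolic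
plane when `a ≠ c` lie outside `s`. The square `x₁²` of the Umemura quadric is one of the `xᵢ²`. -/
noncomputable def hyperbolicForm : MvPolynomial σ R :=
  ∑ i ∈ s, X i ^ 2 - X a * X c

theorem hyperbolicForm_isHomogeneous : (hyperbolicForm R s a c).IsHomogeneous 2 :=
  (IsHomogeneous.sum s _ 2 fun i _ ↦ isHomogeneous_X_pow i 2).sub
    ((isHomogeneous_X R a).mul (isHomogeneous_X R c))

theorem hyperbolicForm_comm : hyperbolicForm R s a c = hyperbolicForm R s c a := by
  rw [hyperbolicForm, hyperbolicForm, mul_comm]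

variable {s a c}

theorem pderiv_hyperbolicForm_left (hac : a ≠ c) (ha : a ∉ s) :
    pderiv a (hyperbolicForm R s a c) = -X c := by
  simp [hyperbolicForm, pderiv_sum_X_sq_of_notMem ha, pderiv_X_of_ne hac.symm]

theorem pderiv_hyperbolicForm_right (hac : a ≠ c) (hc : c ∉ s) :
    pderiv c (hyperbolicForm R s a c) = -X a := by
  rw [hyperbolicForm_comm, pderiv_hyperbolicForm_left R hac.symm hc]

theorem pderiv_hyperbolicForm_of_mem {i : σ} (hi : i ∈ s) (hia : i ≠ a) (hic : i ≠ c) :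
    pderiv i (hyperbolicForm R s a c) = 2 * X i := by
  simp [hyperbolicForm, pderiv_sum_X_sq_of_mem hi, pderiv_X_of_ne hia.symm,
    pderiv_X_of_ne hic.symm]

theorem pderiv_hyperbolicForm_of_notMem {i : σ} (hi : i ∉ s) (hia : i ≠ a) (hic : i ≠ c) :
    pderiv i (hyperbolicForm R s a c) = 0 := by
  simp [hyperbolicForm, pderiv_sum_X_sq_of_notMem hi, pderiv_X_of_ne hia.symm,
    pderiv_X_of_ne hic.symm]

variable {R}

theorem forall_eval_pderiv_hyperbolicForm_eq_zero_iff (h2 : (2 : R) ∈ R⁰) (hac : a ≠ c)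
    (ha : a ∉ s) (hc : c ∉ s) (p : σ → R) :
    (∀ i, eval p (pderiv i (hyperbolicForm R s a c)) = 0) ↔
      p a = 0 ∧ p c = 0 ∧ ∀ i ∈ s, p i = 0 := by
  have at_a : eval p (pderiv a (hyperbolicForm R s a c)) = -p c := by
    rw [pderiv_hyperbolicForm_left R hac ha, map_neg, eval_X]
  have at_c : eval p (pderiv c (hyperbolicForm R s a c)) = -p a := by
    rw [pderiv_hyperbolicForm_right R hac hc, map_neg, eval_X]
  have at_s {i : σ} (hi : i ∈ s) : eval p (pderiv i (hyperbolicForm R s a c)) = 2 * p i := by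
    rw [pderiv_hyperbolicForm_of_mem R hi (ne_of_mem_of_not_mem hi ha)
      (ne_of_mem_of_not_mem hi hc), map_mul, map_ofNat, eval_X]
  constructor
  · exact fun h ↦ ⟨neg_eq_zero.1 (at_c ▸ h c), neg_eq_zero.1 (at_a ▸ h a), fun i hi ↦
      (mul_left_mem_nonZeroDivisors_eq_zero_iff h2).1 (at_s hi ▸ h i)⟩
  · rintro ⟨hpa, hpc, hps⟩ i
    obtain rfl | hia := eq_or_ne i a
    · rw [at_a, hpc, neg_zero]
    obtain rfl | hic := eq_or_ne i c
    · rw [at_c, hpa, neg_zero]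
    by_cases hi : i ∈ s
    · rw [at_s hi, hps i hi, mul_zero]
    · rw [pderiv_hyperbolicForm_of_notMem R hi hia hic, map_zero]

theorem isSingularPoint_hyperbolicForm_add_toMvPolynomial_iff [Finite σ] (h2 : (2 : R) ∈ R⁰)
    (hac : a ≠ c) (ha : a ∉ s) (hc : c ∉ s) {l : σ} (hl : l ∉ s) (hla : l ≠ a) (hlc : l ≠ c)
    (γ : Polynomial R) (p : σ → R) :
    IsSingularPoint (hyperbolicForm R s a c + γ.toMvPolynomial l) p ↔
      (p a = 0 ∧ p c = 0 ∧ ∀ i ∈ s, p i = 0) ∧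
        γ.eval (p l) = 0 ∧ γ.derivative.eval (p l) = 0 := by
  rw [isSingularPoint_add_toMvPolynomial_iff (hyperbolicForm_isHomogeneous R s a c)
    (mod_cast h2) (pderiv_hyperbolicForm_of_notMem R hl hla hlc),
    forall_eval_pderiv_hyperbolicForm_eq_zero_iff h2 hac ha hc]

end HyperbolicForm

/-- The indices of the square terms `x₁², x₃², …, x_{n-1}²` of the Umemura quadric among the
coordinates `x₀, …, x_{n-1}, t`, where `t` has index `n`. -/
def squareIndices (n : ℕ) : Finset (Fin (n + 1)) :=
  {i | (i : ℕ) = 1 ∨ 3 ≤ (i : ℕ) ∧ (i : ℕ) < n}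

theorem mem_squareIndices {n : ℕ} {i : Fin (n + 1)} :
    i ∈ squareIndices n ↔ (i : ℕ) = 1 ∨ 3 ≤ (i : ℕ) ∧ (i : ℕ) < n := by
  simp [squareIndices]

theorem sum_squareIndices {M : Type*} [AddCommMonoid M] {n : ℕ} (hn : 1 ≤ n)
    (f : Fin (n + 1) → M) :
    ∑ i ∈ squareIndices n, f i =
      f ⟨1, by omega⟩ + ∑ i : Fin (n + 1), if 3 ≤ (i : ℕ) ∧ (i : ℕ) < n then f i else 0 := by
  have insert_one : squareIndices n =
      insert ⟨1, by omega⟩ ({i | 3 ≤ (i : ℕ) ∧ (i : ℕ) < n} : Finset (Fin (n + 1))) := by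
    ext i
    simp [mem_squareIndices, Fin.ext_iff]
  rw [insert_one, Finset.sum_insert (by simp), Finset.sum_filter]

theorem forall_val_lt_iff_squareIndices {n : ℕ} (hn : 2 < n) (P : Fin (n + 1) → Prop) :
    (∀ i : Fin (n + 1), (i : ℕ) < n → P i) ↔
      P ⟨0, by omega⟩ ∧ P ⟨2, by omega⟩ ∧ ∀ i ∈ squareIndices n, P i := by
  simp only [mem_squareIndices]
  constructor
  · exact fun h ↦ ⟨h _ (by grind), h _ (by grind), fun i hi ↦ h i (by omega)⟩
  · rintro ⟨h0, h2, hs⟩ ⟨i, hi⟩ hin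
    obtain rfl | rfl | hi' : i = 0 ∨ i = 2 ∨ (i = 1 ∨ 3 ≤ i ∧ i < n) := by grind
    exacts [h0, h2, hs _ hi']

theorem stmt7_general {R : Type*} [CommRing R] (h2 : (2 : R) ∈ R⁰) {n : ℕ} (hn : 2 < n)
    (γ : Polynomial R) (F : MvPolynomial (Fin (n + 1)) R)
    (hF : F = X ⟨1, by omega⟩ ^ 2 - X ⟨0, by omega⟩ * X ⟨2, by omega⟩ +
        (∑ i : Fin (n + 1), if 3 ≤ (i : ℕ) ∧ (i : ℕ) < n then X i ^ 2 else 0) +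
        Polynomial.aeval (X (Fin.last n)) γ)
    (p : Fin (n + 1) → R) :
    IsSingularPoint F p ↔
      (∀ i : Fin (n + 1), (i : ℕ) < n → p i = 0) ∧
        γ.eval (p (Fin.last n)) = 0 ∧ γ.derivative.eval (p (Fin.last n)) = 0 := by
  have hF' : F = hyperbolicForm R (squareIndices n) ⟨0, by omega⟩ ⟨2, by omega⟩ +
      γ.toMvPolynomial (Fin.last n) := by
    rw [hF, hyperbolicForm, sum_squareIndices (by omega), Polynomial.toMvPolynomial,
      sub_add_eq_add_sub]
  rw [hF', forall_val_lt_iff_squareIndices hn]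
  apply isSingularPoint_hyperbolicForm_add_toMvPolynomial_iff h2 <;>
    grind [mem_squareIndices]

/-- The singular points of the affine hypersurface
`{x₁² − x₀x₂ + x₃² + ⋯ + x_{n−1}² + γ(t) = 0} ⊂ 𝔸^{n+1}` are exactly the points
`(0, …, 0, s)` with `s` a root of `γ` of multiplicity at least `2`. -/
theorem stmt7 (k : Type*) [Field k] [CharZero k] (n : ℕ) (hn : 3 ≤ n)
    (γ : Polynomial k) (F : MvPolynomial (Fin (n + 1)) k)
    (hF : F = MvPolynomial.X ⟨1, by omega⟩ ^ 2 -
        MvPolynomial.X ⟨0, by omega⟩ * MvPolynomial.X ⟨2, by omega⟩ +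
        (∑ i : Fin (n + 1), if 3 ≤ (i : ℕ) ∧ (i : ℕ) < n then MvPolynomial.X i ^ 2 else 0) +
        Polynomial.aeval (MvPolynomial.X (Fin.last n)) γ) :
    ∀ p : Fin (n + 1) → k,
      (MvPolynomial.eval p F = 0 ∧
        ∀ i : Fin (n + 1), MvPolynomial.eval p (MvPolynomial.pderiv i F) = 0) ↔
      ((∀ i : Fin (n + 1), (i : ℕ) < n → p i = 0) ∧
        Polynomial.eval (p (Fin.last n)) γ = 0 ∧
        Polynomial.eval (p (Fin.last n)) (Polynomial.derivative γ) = 0) := by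
  exact stmt7_general (mem_nonZeroDivisors_of_ne_zero two_ne_zero) hn γ F hF
end

section
/- Let k be an algebraically closed field of characteristic 0 and let m ≥ 3 be an integer. Let B ∈ GL_m(k) be an invertible matrix such that for every v ∈ k^m with v₁² + ⋯ + v_m² = 0 one also has (Bv)₁² + ⋯ + (Bv)_m² = 0. Then there exists λ ∈ k ∖ {0} such that Bᵀ B = λ·I_m. -/
/-!
If `c ^ 2 = -1`, the vectors `eᵢ ± c eⱼ` with `i ≠ j` are isotropic for `Σ vᵢ ^ 2`. A symmetric
matrix `S` whose quadratic form vanishes on them satisfies `Sᵢᵢ - Sⱼⱼ ± 2 c Sᵢⱼ = 0`, so its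
off-diagonal entries are zero and its diagonal is constant as soon as `2` is cancellable.
The matrix `S = Bᵀ B` is of this kind when `B` preserves the isotropic cone.
-/

open Matrix

section CommSemiring

variable {R m n : Type*} [CommSemiring R] [Fintype m] [Fintype n]

theorem single_add_single_dotProduct_mulVec_self [DecidableEq n] (S : Matrix n n R) (c : R)
    (i j : n) :
    (Pi.single i 1 + Pi.single j c) ⬝ᵥ S *ᵥ (Pi.single i 1 + Pi.single j c) =
      S i i + c * (S i j + S j i) + c ^ 2 * S j j := by
  simp only [mulVec_add, mulVec_single, MulOpposite.op_one, one_smul, op_smul_eq_smul,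
    dotProduct_add, add_dotProduct, single_dotProduct, col_apply, one_mul, Pi.smul_apply,
    smul_eq_mul]
  ring

/-- The quadratic form `v ↦ vᵀ S v` vanishes on the isotropic cone of the standard quadratic form
`Σ vᵢ ^ 2`, encoded as `v ⬝ᵥ v`. For `S = Bᵀ B` this says that `B` preserves the cone. -/
def VanishesOnIsotropicCone (S : Matrix n n R) : Prop :=
  ∀ v : n → R, v ⬝ᵥ v = 0 → v ⬝ᵥ S *ᵥ v = 0

theorem vanishesOnIsotropicCone_transpose_mul_self_iff {B : Matrix m n R} :
    VanishesOnIsotropicCone (Bᵀ * B) ↔ ∀ v : n → R, v ⬝ᵥ v = 0 → B *ᵥ v ⬝ᵥ B *ᵥ v = 0 := by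
  simp only [VanishesOnIsotropicCone, ← mulVec_mulVec, dotProduct_mulVec _ Bᵀ, vecMul_transpose]

end CommSemiring

section CommRing

variable {R n : Type*} [CommRing R] [Fintype n]

theorem isUnit_smul_one_matrix_iff [DecidableEq n] [Nonempty n] {r : R} :
    IsUnit (r • (1 : Matrix n n R)) ↔ IsUnit r := by
  rw [isUnit_iff_isUnit_det, det_smul, det_one, mul_one, isUnit_pow_iff Fintype.card_ne_zero]

theorem single_add_single_dotProduct_self_eq_zero [DecidableEq n] {c : R} (hc : c ^ 2 = -1)
    {i j : n} (hij : i ≠ j) :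
    (Pi.single i 1 + Pi.single j c : n → R) ⬝ᵥ (Pi.single i 1 + Pi.single j c) = 0 := by
  simpa [hij, hij.symm, hc] using single_add_single_dotProduct_mulVec_self (1 : Matrix n n R) c i j

namespace VanishesOnIsotropicCone

variable {S : Matrix n n R} {c : R} {i j : n}

theorem apply_self_sub_apply_self_add_two_mul (h : VanishesOnIsotropicCone S) (hS : S.IsSymm)
    (hc : c ^ 2 = -1) (hij : i ≠ j) : S i i - S j j + 2 * c * S i j = 0 := by
  classical
  have hv := h _ (single_add_single_dotProduct_self_eq_zero hc hij)
  rw [single_add_single_dotProduct_mulVec_self, hS.apply i j, hc] at hv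
  linear_combination hv

theorem apply_eq_zero (h : VanishesOnIsotropicCone S) (hS : S.IsSymm) (h2 : IsRegular (2 : R))
    (hc : c ^ 2 = -1) (hij : i ≠ j) : S i j = 0 := by
  have hpos := h.apply_self_sub_apply_self_add_two_mul hS hc hij
  have hneg := h.apply_self_sub_apply_self_add_two_mul hS ((neg_sq c).trans hc) hij
  have hfour : 2 * (2 * S i j) = 0 := by
    linear_combination -c * hpos + c * hneg + 4 * S i j * hc
  exact h2.left.mul_left_eq_zero_iff.mp (h2.left.mul_left_eq_zero_iff.mp hfour)

theorem apply_self_eq_apply_self (h : VanishesOnIsotropicCone S) (hS : S.IsSymm)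
    (h2 : IsRegular (2 : R)) (hc : c ^ 2 = -1) (i j : n) : S i i = S j j := by
  rcases eq_or_ne i j with rfl | hij
  · rfl
  have hpos := h.apply_self_sub_apply_self_add_two_mul hS hc hij
  rw [h.apply_eq_zero hS h2 hc hij, mul_zero, add_zero] at hpos
  exact sub_eq_zero.mp hpos

theorem eq_smul_one [DecidableEq n] (h : VanishesOnIsotropicCone S) (hS : S.IsSymm)
    (h2 : IsRegular (2 : R)) (hc : c ^ 2 = -1) (l : n) : S = S l l • (1 : Matrix n n R) := by
  ext i j
  rcases eq_or_ne i j with rfl | hij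
  · simpa using h.apply_self_eq_apply_self hS h2 hc i l
  · simpa [hij] using h.apply_eq_zero hS h2 hc hij

end VanishesOnIsotropicCone

theorem stmt8_general [DecidableEq n] (h2 : IsRegular (2 : R)) (hi : IsSquare (-1 : R))
    {B : Matrix n n R} (hB : IsUnit B)
    (h : ∀ v : n → R, (∑ i, v i ^ 2) = 0 → (∑ i, (B *ᵥ v) i ^ 2) = 0) :
    ∃ lam : R, IsUnit lam ∧ Bᵀ * B = lam • (1 : Matrix n n R) := by
  rcases isEmpty_or_nonempty n with _ | ⟨⟨l⟩⟩
  · exact ⟨1, isUnit_one, Subsingleton.elim _ _⟩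
  obtain ⟨c, hc⟩ := (isSquare_iff_exists_sq _).mp hi
  have hcone : VanishesOnIsotropicCone (Bᵀ * B) :=
    vanishesOnIsotropicCone_transpose_mul_self_iff.mpr (by simpa only [dotProduct, ← sq] using h)
  have hscalar := hcone.eq_smul_one (isSymm_transpose_mul_self B) h2 hc.symm l
  have hunit : IsUnit (Bᵀ * B) := (B.isUnit_transpose.mpr hB).mul hB
  have : Nonempty n := ⟨l⟩
  exact ⟨(Bᵀ * B) l l, isUnit_smul_one_matrix_iff.mp (hscalar ▸ hunit), hscalar⟩

end CommRing

/-- Over an algebraically closed field of characteristic `0`, an invertible matrix `B`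
preserving the affine cone `{Σ vᵢ² = 0}` in at least `3` variables satisfies
`Bᵀ B = λ·I` for some nonzero scalar `λ`. -/
theorem stmt8 (k : Type*) [Field k] [IsAlgClosed k] [CharZero k]
    (m : ℕ) (hm : 3 ≤ m)
    (B : Matrix (Fin m) (Fin m) k) (hB : IsUnit B)
    (h : ∀ v : Fin m → k, (∑ i, v i ^ 2) = 0 → (∑ i, (B.mulVec v) i ^ 2) = 0) :
    ∃ lam : k, lam ≠ 0 ∧ B.transpose * B = lam • (1 : Matrix (Fin m) (Fin m) k) := by
  simpa only [isUnit_iff_ne_zero] using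
    stmt8_general (.of_ne_zero two_ne_zero) (IsAlgClosed.exists_eq_mul_self (-1 : k)) hB h
end

section
/- Let k be an algebraically closed field of characteristic 0 and n ≥ 3 an integer. Let Z = {v ∈ k^{n+1} : v₀ = 0 and v₁² + ⋯ + vₙ² = 0}. Then an invertible matrix A ∈ GL_{n+1}(k) satisfies A(Z) ⊆ Z if and only if A has the block form: its first row is (α, 0, …, 0) with α ≠ 0, its lower-left column (entries A_{i0} for 1 ≤ i ≤ n) is arbitrary, and its lower-right n×n block B satisfies Bᵀ B = λ·I_n for some λ ∈ k ∖ {0}. -/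
/-! If `d² = -1` and `i ≠ j`, then `eᵢ + d eⱼ` and `eᵢ - d eⱼ` are isotropic for the form `∑ xᵢ²`.
Adding and subtracting the conditions they impose separates the coefficients, so a linear form
vanishing on all isotropic vectors is zero and a symmetric bilinear form `S` with `S(w, w) = 0` for
all isotropic `w` is a multiple of the standard one. For a matrix with lower-right block `B`
preserving the cone, the first fact kills the off-diagonal part of the first row, and the second,
applied to the Gram matrix `Bᵀ * B`, makes it scalar; invertibility then passes to the corner entry
and to `B` because the matrix is block triangular. -/

open Matrix

section Isotropic

variable {R ι m : Type*} [CommRing R]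

lemma eq_zero_and_eq_zero_of_forall_add_mul (h2 : IsRegular (2 : R)) (hsq : IsSquare (-1 : R))
    {x y : R} (h : ∀ d : R, d * d = -1 → x + d * y = 0) : x = 0 ∧ y = 0 := by
  obtain ⟨d, hd⟩ := hsq
  have hplus : x + d * y = 0 := h d hd.symm
  have hminus : x + -d * y = 0 := h (-d) (by rw [neg_mul_neg, hd])
  have hx : x = 0 := h2.left.mul_left_eq_zero_iff.mp (by linear_combination hplus + hminus)
  refine ⟨hx, ?_⟩
  linear_combination -d * hplus + d * hx - y * hd

variable [Fintype ι]

lemma dotProduct_self_single_add_single_eq_zero [DecidableEq ι] {i j : ι} (hij : i ≠ j) {d : R}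
    (hd : d * d = -1) :
    (Pi.single i 1 + Pi.single j d : ι → R) ⬝ᵥ (Pi.single i 1 + Pi.single j d) = 0 := by
  simp [hij, hij.symm, hd]

lemma eq_zero_of_forall_isotropic_dotProduct_eq_zero [Nontrivial ι] (h2 : IsRegular (2 : R))
    (hsq : IsSquare (-1 : R)) {a : ι → R} (h : ∀ w : ι → R, w ⬝ᵥ w = 0 → a ⬝ᵥ w = 0) :
    a = 0 := by
  classical
  funext i
  obtain ⟨j, hji⟩ := exists_ne i
  have hcomb (d : R) (hd : d * d = -1) : a i + d * a j = 0 := by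
    simpa [dotProduct_add, mul_comm] using
      h _ (dotProduct_self_single_add_single_eq_zero hji.symm hd)
  exact (eq_zero_and_eq_zero_of_forall_add_mul h2 hsq hcomb).1

lemma mulVec_dotProduct_mulVec_self [Fintype m] (B : Matrix m ι R) (w : ι → R) :
    B *ᵥ w ⬝ᵥ B *ᵥ w = w ⬝ᵥ (Bᵀ * B) *ᵥ w := by
  rw [← mulVec_mulVec, dotProduct_mulVec w, vecMul_transpose]

variable [DecidableEq ι]

lemma exists_eq_smul_one_of_forall_isotropic (h2 : IsRegular (2 : R))
    (hsq : IsSquare (-1 : R)) {S : Matrix ι ι R} (hS : S.IsSymm)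
    (h : ∀ w : ι → R, w ⬝ᵥ w = 0 → w ⬝ᵥ S *ᵥ w = 0) : ∃ c : R, S = c • 1 := by
  have hentries {i j : ι} (hij : i ≠ j) : S i i - S j j = 0 ∧ 2 * S i j = 0 := by
    refine eq_zero_and_eq_zero_of_forall_add_mul h2 hsq fun d hd => ?_
    have hw := h _ (dotProduct_self_single_add_single_eq_zero hij hd)
    simp only [mulVec_add, mulVec_single, add_dotProduct, dotProduct_add, single_dotProduct,
      Pi.smul_apply, col_apply, MulOpposite.smul_eq_mul_unop, MulOpposite.unop_op,
      hS.apply i j] at hw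
    linear_combination hw - S j j * hd
  obtain hι | ⟨⟨i₀⟩⟩ := isEmpty_or_nonempty ι
  · exact ⟨0, Subsingleton.elim _ _⟩
  refine ⟨S i₀ i₀, Matrix.ext fun i j => ?_⟩
  obtain rfl | hij := eq_or_ne i j
  · obtain rfl | hi := eq_or_ne i i₀
    · simp
    · simpa using sub_eq_zero.mp (hentries hi).1
  · simpa [hij] using h2.left.mul_left_eq_zero_iff.mp (hentries hij).2

lemma forall_isotropic_mulVec_iff [Fintype m] (h2 : IsRegular (2 : R))
    (hsq : IsSquare (-1 : R)) (B : Matrix m ι R) :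
    (∀ w : ι → R, w ⬝ᵥ w = 0 → B *ᵥ w ⬝ᵥ B *ᵥ w = 0) ↔ ∃ c : R, Bᵀ * B = c • 1 := by
  simp only [mulVec_dotProduct_mulVec_self]
  refine ⟨exists_eq_smul_one_of_forall_isotropic h2 hsq ?_, ?_⟩
  · rw [IsSymm, transpose_mul, transpose_transpose]
  · rintro ⟨c, hc⟩ w hw
    rw [hc, smul_mulVec, one_mulVec, dotProduct_smul, hw, smul_zero]

lemma isUnit_of_transpose_mul_self_eq_smul_one [Nonempty ι] {B : Matrix ι ι R} (hB : IsUnit B.det)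
    {c : R} (hc : Bᵀ * B = c • 1) : IsUnit c := by
  have hdet : B.det * B.det = c ^ Fintype.card ι := by simpa using congrArg det hc
  exact (isUnit_pow_iff Fintype.card_ne_zero).mp (hdet ▸ hB.mul hB)

end Isotropic

section QuadricCone

variable {R : Type*} [CommRing R] {n : ℕ}

/-- The affine cone `{v₀ = 0, v₁² + ⋯ + vₙ² = 0}` over the quadric `Q_{n-2}`; the sum of squares is
written as the dot product of the last `n` coordinates with themselves. -/
def quadricCone (R : Type*) [CommRing R] (n : ℕ) : Set (Fin (n + 1) → R) :=
  {v | v 0 = 0 ∧ vecTail v ⬝ᵥ vecTail v = 0}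

lemma mem_quadricCone_iff_sum_ite {v : Fin (n + 1) → R} :
    v ∈ quadricCone R n ↔
      v 0 = 0 ∧ (∑ i : Fin (n + 1), if 1 ≤ (i : ℕ) then v i ^ 2 else 0) = 0 := by
  simp [quadricCone, Fin.sum_univ_succ, dotProduct, vecTail, sq]

lemma vecCons_mem_quadricCone_iff {a : R} {w : Fin n → R} :
    vecCons a w ∈ quadricCone R n ↔ a = 0 ∧ w ⬝ᵥ w = 0 :=
  Iff.rfl

lemma forall_mem_quadricCone {p : (Fin (n + 1) → R) → Prop} :
    (∀ v ∈ quadricCone R n, p v) ↔ ∀ w : Fin n → R, w ⬝ᵥ w = 0 → p (vecCons 0 w) := by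
  refine ⟨fun h w hw => h _ (vecCons_mem_quadricCone_iff.mpr ⟨rfl, hw⟩), fun h v ⟨hv, hq⟩ => ?_⟩
  have hcons : vecCons 0 (vecTail v) = v := by rw [← hv]; exact cons_head_tail v
  exact hcons ▸ h _ hq

lemma mulVec_vecCons_zero {m : ℕ} (A : Matrix (Fin (m + 1)) (Fin (n + 1)) R) (w : Fin n → R) :
    A *ᵥ vecCons 0 w =
      vecCons (vecTail (A 0) ⬝ᵥ w) (A.submatrix Fin.succ Fin.succ *ᵥ w) := by
  funext i
  refine Fin.cases ?_ (fun i => ?_) i <;> simp [mulVec, dotProduct, Fin.sum_univ_succ, vecTail]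

theorem mapsTo_quadricCone_iff (h2 : IsRegular (2 : R)) (hsq : IsSquare (-1 : R)) (hn : 2 ≤ n)
    (A : Matrix (Fin (n + 1)) (Fin (n + 1)) R) :
    Set.MapsTo A.mulVec (quadricCone R n) (quadricCone R n) ↔
      vecTail (A 0) = 0 ∧
        ∃ c : R, (A.submatrix Fin.succ Fin.succ)ᵀ * A.submatrix Fin.succ Fin.succ = c • 1 := by
  have : Nontrivial (Fin n) := Fin.nontrivial_iff_two_le.mpr hn
  have hrow : (∀ w : Fin n → R, w ⬝ᵥ w = 0 → vecTail (A 0) ⬝ᵥ w = 0) ↔ vecTail (A 0) = 0 :=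
    ⟨eq_zero_of_forall_isotropic_dotProduct_eq_zero h2 hsq, fun h w _ => by simp [h]⟩
  rw [← hrow, ← forall_isotropic_mulVec_iff h2 hsq, Set.MapsTo,
    forall_mem_quadricCone]
  simp only [mulVec_vecCons_zero, vecCons_mem_quadricCone_iff, imp_and, forall_and]

lemma det_eq_mul_det_submatrix_succ (A : Matrix (Fin (n + 1)) (Fin (n + 1)) R)
    (hrow : vecTail (A 0) = 0) : A.det = A 0 0 * (A.submatrix Fin.succ Fin.succ).det := by
  have hzero (j : Fin n) : A 0 j.succ = 0 := congrFun hrow j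
  simp [det_succ_row_zero, Fin.sum_univ_succ, hzero]

end QuadricCone

theorem stmt9_general {R : Type*} [CommRing R] (h2 : IsRegular (2 : R)) (hsq : IsSquare (-1 : R))
    {n : ℕ} (hn : 2 ≤ n) {A : Matrix (Fin (n + 1)) (Fin (n + 1)) R} (hA : IsUnit A) :
    Set.MapsTo A.mulVec (quadricCone R n) (quadricCone R n) ↔
      IsUnit (A 0 0) ∧ (∀ j : Fin (n + 1), j ≠ 0 → A 0 j = 0) ∧
        ∃ c : R, IsUnit c ∧
          (A.submatrix Fin.succ Fin.succ)ᵀ * A.submatrix Fin.succ Fin.succ = c • 1 := by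
  have : NeZero n := ⟨by lia⟩
  have hrow_iff : vecTail (A 0) = 0 ↔ ∀ j : Fin (n + 1), j ≠ 0 → A 0 j = 0 := by
    simp [funext_iff, vecTail, Fin.forall_fin_succ]
  rw [mapsTo_quadricCone_iff h2 hsq hn, ← hrow_iff]
  refine ⟨fun ⟨hrow, c, hc⟩ => ?_, fun ⟨_, hrow, c, _, hc⟩ => ⟨hrow, c, hc⟩⟩
  have hdet : IsUnit (A 0 0 * (A.submatrix Fin.succ Fin.succ).det) :=
    det_eq_mul_det_submatrix_succ A hrow ▸ A.isUnit_iff_isUnit_det.mp hA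
  obtain ⟨hcorner, hblock⟩ := IsUnit.mul_iff.mp hdet
  exact ⟨hcorner, hrow, c, isUnit_of_transpose_mul_self_eq_smul_one hblock hc, hc⟩

/-- An invertible matrix `A` preserves the affine cone
`Z = {v₀ = 0, v₁² + ⋯ + vₙ² = 0} ⊂ k^{n+1}` if and only if its first row is `(α, 0, …, 0)`
with `α ≠ 0` and its lower-right `n × n` block `B` satisfies `Bᵀ B = λ·I` for some `λ ≠ 0`
(the lower-left column being arbitrary). -/
theorem stmt9 (k : Type*) [Field k] [IsAlgClosed k] [CharZero k]
    (n : ℕ) (hn : 3 ≤ n)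
    (A : Matrix (Fin (n + 1)) (Fin (n + 1)) k) (hA : IsUnit A) :
    (∀ v : Fin (n + 1) → k,
        (v 0 = 0 ∧ (∑ i : Fin (n + 1), if 1 ≤ (i : ℕ) then v i ^ 2 else 0) = 0) →
        (A.mulVec v 0 = 0 ∧
          (∑ i : Fin (n + 1), if 1 ≤ (i : ℕ) then (A.mulVec v) i ^ 2 else 0) = 0)) ↔
    (A 0 0 ≠ 0 ∧ (∀ j : Fin (n + 1), j ≠ 0 → A 0 j = 0) ∧
      ∃ lam : k, lam ≠ 0 ∧
        (Matrix.of fun i j : Fin n => A i.succ j.succ).transpose *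
            (Matrix.of fun i j : Fin n => A i.succ j.succ) =
          lam • (1 : Matrix (Fin n) (Fin n) k)) := by
  simpa only [isUnit_iff_ne_zero, Set.MapsTo, mem_quadricCone_iff_sum_ite, submatrix] using
    stmt9_general (.of_ne_zero two_ne_zero) (IsAlgClosed.exists_eq_mul_self (-1)) (by lia) hA
end
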